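/- Let x_1,…,x_N ∈ ℝ^m be partitioned into two planted clusters A*, B* such that ‖x_i − γ‖₂ ≤ 1 for i ∈ A* and ‖x_i + γ‖₂ ≤ 1 for i ∈ B*, where γ ∈ ℝ^m with ‖γ‖₂ > 1. Suppose (A*, B*) is the unique minimizer of the 2-means objective over all partitions of {1,…,N} into two clusters. Let z be a leading eigenvector of Φ₀Φ₀ᵀ satisfying |γᵀz| > ‖z‖₂, and set y := Φ₀ᵀz (a leading eigenvector of Φ₀ᵀΦ₀). Then the planted partition (A*, B*) equals a threshold partition of y, and it is the unique minimizer of the 2-means objective among all threshold partitions of y; hence spectral k-means clustering recovers the planted clusters. -/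

import Mathlib

open scoped BigOperators RealInnerProductSpace
open Finset

namespace Stmt12

variable {m N : ℕ}

/-- The mean of the points of `x` indexed by the finset `S`. -/
noncomputable def clusterMean (x : Fin N → EuclideanSpace ℝ (Fin m))
    (S : Finset (Fin N)) : EuclideanSpace ℝ (Fin m) :=
  ((S.card : ℝ))⁻¹ • ∑ i ∈ S, x i

/-- The 2-means objective of the partition `(S, Sᶜ)` of the points `x`. -/
noncomputable def twoMeansObj (x : Fin N → EuclideanSpace ℝ (Fin m))
    (S : Finset (Fin N)) : ℝ :=
  (∑ i ∈ S, ‖x i - clusterMean x S‖ ^ 2) + ∑ i ∈ Sᶜ, ‖x i - clusterMean x Sᶜ‖ ^ 2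

end Stmt12

open Stmt12

/-!
Projecting onto `z` changes inner products by at most `r * ‖z‖` over a ball of radius `r`. The
projections of two balls are therefore disjoint intervals as soon as the projections of their
centers are further apart than the sum of the two half-widths, and a threshold between the
intervals separates the clusters. Centering the data only translates `y`, and so only moves
the threshold.
-/

/-- `S` and its complement form a threshold partition of `y`. Partitions are encoded by either of
their two blocks, so `S` may be the block below the threshold or the one above it. -/
def IsThresholdPartition {ι R : Type*} [Fintype ι] [DecidableEq ι] [LinearOrder R]
    (y : ι → R) (S : Finset ι) : Prop :=
  ∃ θ : R, S = univ.filter (fun i => y i < θ) ∨ S = (univ.filter (fun i => y i < θ))ᶜ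

namespace IsThresholdPartition

variable {ι R : Type*} [Fintype ι] [DecidableEq ι] [LinearOrder R] {y : ι → R} {S : Finset ι}

theorem of_forall_lt_of_forall_le {θ : R} (hlt : ∀ i ∈ S, y i < θ) (hle : ∀ i ∈ Sᶜ, θ ≤ y i) :
    IsThresholdPartition y S := by
  refine ⟨θ, .inl (Finset.ext fun i => ?_)⟩
  have hmem : y i < θ → i ∈ S := fun hi =>
    by_contra fun hiS => (hle i (mem_compl.mpr hiS)).not_gt hi
  simpa using ⟨hlt i, hmem⟩

theorem of_compl (h : IsThresholdPartition y Sᶜ) : IsThresholdPartition y S :=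
  h.imp fun _ hS => hS.symm.imp compl_inj_iff.mp fun hF => eq_compl_comm.mp hF.symm

end IsThresholdPartition

section InnerProductSpace

variable {E : Type*} [NormedAddCommGroup E] [InnerProductSpace ℝ E]

theorem abs_inner_sub_inner_le {p a : E} {r : ℝ} (h : ‖p - a‖ ≤ r) (z : E) :
    |⟪p, z⟫ - ⟪a, z⟫| ≤ r * ‖z‖ := by
  calc |⟪p, z⟫ - ⟪a, z⟫| = |⟪p - a, z⟫| := by rw [inner_sub_left]
    _ ≤ ‖p - a‖ * ‖z‖ := abs_real_inner_le_norm _ _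
    _ ≤ r * ‖z‖ := by gcongr

variable {ι : Type*} [Fintype ι] [DecidableEq ι] {x : ι → E} {a b z : E} {r s : ℝ} {S : Finset ι}

theorem IsThresholdPartition.inner_sub_of_lt_inner_sub (hS : ∀ i ∈ S, ‖x i - a‖ ≤ r)
    (hSc : ∀ i ∈ Sᶜ, ‖x i - b‖ ≤ s) (hsep : (r + s) * ‖z‖ < ⟪b - a, z⟫) (c : E) :
    IsThresholdPartition (fun i => ⟪x i - c, z⟫) S := by
  rw [inner_sub_left] at hsep
  refine .of_forall_lt_of_forall_le (θ := ⟪b, z⟫ - s * ‖z‖ - ⟪c, z⟫)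
    (fun i hi => ?_) fun i hi => ?_ <;> rw [inner_sub_left]
  · linarith [(abs_le.mp (abs_inner_sub_inner_le (hS i hi) z)).2]
  · linarith [(abs_le.mp (abs_inner_sub_inner_le (hSc i hi) z)).1]

theorem IsThresholdPartition.inner_sub_of_lt_abs_inner_sub (hS : ∀ i ∈ S, ‖x i - a‖ ≤ r)
    (hSc : ∀ i ∈ Sᶜ, ‖x i - b‖ ≤ s) (hsep : (r + s) * ‖z‖ < |⟪a - b, z⟫|) (c : E) :
    IsThresholdPartition (fun i => ⟪x i - c, z⟫) S := by
  rcases lt_abs.mp hsep with hab | hba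
  · exact .of_compl (inner_sub_of_lt_inner_sub hSc (by simpa using hS) (by rwa [add_comm]) c)
  · exact inner_sub_of_lt_inner_sub hS hSc (by rwa [← inner_neg_left, neg_sub] at hba) c

end InnerProductSpace

theorem spectral_clustering_recovers_general {m N : ℕ} {x : Fin N → EuclideanSpace ℝ (Fin m)}
    {a b z : EuclideanSpace ℝ (Fin m)} {r s : ℝ} {S : Finset (Fin N)}
    (hS : ∀ i ∈ S, ‖x i - a‖ ≤ r) (hSc : ∀ i ∈ Sᶜ, ‖x i - b‖ ≤ s)
    (hopt : ∀ T : Finset (Fin N), T ≠ S → T ≠ Sᶜ → twoMeansObj x S < twoMeansObj x T)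
    (hsep : (r + s) * ‖z‖ < |⟪a - b, z⟫|) (c : EuclideanSpace ℝ (Fin m)) :
    IsThresholdPartition (fun i => ⟪x i - c, z⟫) S ∧
      ∀ T, IsThresholdPartition (fun i => ⟪x i - c, z⟫) T → T ≠ S → T ≠ Sᶜ →
        twoMeansObj x S < twoMeansObj x T :=
  ⟨.inner_sub_of_lt_abs_inner_sub hS hSc hsep c, fun T _ => hopt T⟩

/-- (Lemma 4.2 of the paper.) Suppose the planted clusters lie in unit
balls centered at `γ` and `−γ` (`‖γ‖ > 1`), the planted partition uniquely minimizes the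
2-means objective, and `z` is a leading eigenvector of `Φ₀Φ₀ᵀ` with `|γᵀz| > ‖z‖₂`.
Then, with `y := Φ₀ᵀz`, the planted partition is a threshold partition of `y` and is the
unique 2-means minimizer among threshold partitions of `y`; hence spectral k-means
clustering recovers the planted clusters. -/
theorem spectral_clustering_recovers
    (m N : ℕ) (x : Fin N → EuclideanSpace ℝ (Fin m))
    (γ : EuclideanSpace ℝ (Fin m)) (hγ : 1 < ‖γ‖)
    (S : Finset (Fin N))
    (hSball : ∀ i ∈ S, ‖x i - γ‖ ≤ 1) (hScball : ∀ i ∈ Sᶜ, ‖x i + γ‖ ≤ 1)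
    (hopt : ∀ T : Finset (Fin N), T ≠ S → T ≠ Sᶜ →
      twoMeansObj x S < twoMeansObj x T)
    (μc : EuclideanSpace ℝ (Fin m)) (hμc : μc = (N : ℝ)⁻¹ • ∑ i, x i)
    (z : EuclideanSpace ℝ (Fin m)) (lam : ℝ) (hz : z ≠ 0)
    (heig : (∑ i, ⟪x i - μc, z⟫ • (x i - μc)) = lam • z)
    (hlead : ∀ (w : EuclideanSpace ℝ (Fin m)) (lam' : ℝ), w ≠ 0 →
      (∑ i, ⟪x i - μc, w⟫ • (x i - μc)) = lam' • w → |lam'| ≤ |lam|)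
    (hsep : ‖z‖ < |⟪γ, z⟫|)
    (y : Fin N → ℝ) (hy : ∀ i, y i = ⟪x i - μc, z⟫) :
    (∃ θ : ℝ, S = Finset.univ.filter (fun i => y i < θ) ∨
      S = (Finset.univ.filter (fun i => y i < θ))ᶜ) ∧
    (∀ θ : ℝ, Finset.univ.filter (fun i => y i < θ) ≠ S →
      Finset.univ.filter (fun i => y i < θ) ≠ Sᶜ →
      twoMeansObj x S < twoMeansObj x (Finset.univ.filter (fun i => y i < θ))) := by
  obtain rfl : y = fun i => ⟪x i - μc, z⟫ := funext hy
  have hsep' : (1 + 1) * ‖z‖ < |⟪γ - -γ, z⟫| := by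
    rw [sub_neg_eq_add, inner_add_left, ← two_mul ⟪γ, z⟫, abs_mul, abs_two]
    linarith
  obtain ⟨hthreshold, hunique⟩ := spectral_clustering_recovers_general hSball
    (b := -γ) (by simpa only [sub_neg_eq_add] using hScball) hopt hsep' μc
  exact ⟨hthreshold, fun θ => hunique _ ⟨θ, .inl rfl⟩⟩
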